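/- Let u ∈ 𝒰_Ω, let w be the length of the orthogonal projection of Ω onto the y-axis, and let M = max_{(x,y)∈Ω} u(x,y). Then w·M ≤ ‖u_x‖₁ ≤ 2·w·M. -/

import Mathlib

open Set MeasureTheory
open scoped ENNReal

/-- Partial derivative of `u` in the `x` direction (junk value where `u` is not
differentiable). -/
noncomputable def ux (u : ℝ × ℝ → ℝ) (z : ℝ × ℝ) : ℝ := fderiv ℝ u z (1, 0)

/-- Partial derivative of `u` in the `y` direction. -/
noncomputable def uy (u : ℝ × ℝ → ℝ) (z : ℝ × ℝ) : ℝ := fderiv ℝ u z (0, 1)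

/-- Directional derivative of `u` in the direction `h`. -/
noncomputable def uh (h : ℝ × ℝ) (u : ℝ × ℝ → ℝ) (z : ℝ × ℝ) : ℝ := fderiv ℝ u z h

/-- The class `𝒰_Ω`: continuous concave functions on `Ω` vanishing on the boundary,
with uniformly bounded gradient over all interior points where it exists. -/
def MemU (Ω : Set (ℝ × ℝ)) (u : ℝ × ℝ → ℝ) : Prop :=
  ContinuousOn u Ω ∧ ConcaveOn ℝ Ω u ∧ (∀ z ∈ frontier Ω, u z = 0) ∧
    ∃ C : ℝ, ∀ z ∈ interior Ω, ∀ g : (ℝ × ℝ) →L[ℝ] ℝ, HasFDerivAt u g z → ‖g‖ ≤ C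

/-- The `L¹` norm of `f` over `Ω`. -/
noncomputable def L1N (Ω : Set (ℝ × ℝ)) (f : ℝ × ℝ → ℝ) : ℝ := ∫ z in Ω, |f z|

/-- The `L^p` norm of `f` over `Ω`, `p ∈ [1, ∞)`. -/
noncomputable def LpN (Ω : Set (ℝ × ℝ)) (p : ℝ) (f : ℝ × ℝ → ℝ) : ℝ :=
  (∫ z in Ω, |f z| ^ p) ^ (1 / p)

/-- The `L^∞` norm (essential supremum) of `f` over `Ω`. -/
noncomputable def LinfN (Ω : Set (ℝ × ℝ)) (f : ℝ × ℝ → ℝ) : ℝ≥0∞ :=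
  essSup (fun z => ENNReal.ofReal |f z|) (volume.restrict Ω)

/-- The width of `Ω` parallel to the (Euclidean unit) vector `h`: the distance between the
two lines of support of `Ω` parallel to `h`, i.e. the oscillation over `Ω` of the linear
functional given by the unit normal `(-h.2, h.1)` to `h`. -/
noncomputable def widthPar (Ω : Set (ℝ × ℝ)) (h : ℝ × ℝ) : ℝ :=
  sSup ((fun z : ℝ × ℝ => -h.2 * z.1 + h.1 * z.2) '' Ω) -
    sInf ((fun z : ℝ × ℝ => -h.2 * z.1 + h.1 * z.2) '' Ω)

/-!
On each horizontal fiber `u` is concave and vanishes at both endpoints, so it increases to its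
maximum and decreases back to `0`: the integral of `|u_x|` over the fiber is twice the fiber
maximum. By Fubini `‖u_x‖₁` is twice the integral over the projection `P` of `Ω` of the fiber
maximum, a nonnegative concave function of `y` with maximum `M`. The upper bound is immediate. For
the lower bound, the superlevel set at height `(1 - r) * M` contains the homothetic copy of `P` of
ratio `r` about a maximum point, and integrating over heights yields `M * μ(P) / (n + 1)` for `P`
of dimension `n`.
-/

theorem integral_abs_deriv_of_monotoneOn {f : ℝ → ℝ} {a b : ℝ} (hab : a ≤ b)
    (hcont : ContinuousOn f (Icc a b)) (hmono : MonotoneOn f (Icc a b))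
    (hright : ∀ x ∈ Ioo a b, DifferentiableWithinAt ℝ f (Ioi x) x) :
    ∫ x in a..b, |deriv f x| = f b - f a := by
  have hnhds : ∀ x ∈ Ioo a b, Icc a b ∈ nhds x := fun x hx => Icc_mem_nhds hx.1 hx.2
  have habs : ∀ x ∈ Ioo a b, |deriv f x| = deriv f x := fun x hx => by
    rw [← derivWithin_of_mem_nhds (hnhds x hx), abs_of_nonneg hmono.derivWithin_nonneg]
  have hae : ∀ᵐ x, x ∈ Ioo a b → deriv f x = derivWithin f (Ioi x) x := by
    filter_upwards [hmono.ae_differentiableWithinAt_of_mem] with x hdiff hx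
    have hwithin : DifferentiableWithinAt ℝ f (Icc a b) x := hdiff (Ioo_subset_Icc_self hx)
    have hderiv := (hwithin.differentiableAt (hnhds x hx)).hasDerivAt
    exact (hderiv.hasDerivWithinAt.derivWithin (uniqueDiffWithinAt_Ioi x)).symm
  rw [← ae_restrict_iff' measurableSet_Ioo, restrict_Ioo_eq_restrict_Ioc, ← uIoc_of_le hab] at hae
  have hint : IntervalIntegrable (deriv f) volume a b :=
    MonotoneOn.intervalIntegrable_deriv (by rwa [uIcc_of_le hab])
  calc ∫ x in a..b, |deriv f x| = ∫ x in a..b, deriv f x :=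
        intervalIntegral.integral_congr_Ioo_of_le hab habs
    _ = ∫ x in a..b, derivWithin f (Ioi x) x := intervalIntegral.integral_congr_ae_restrict hae
    _ = f b - f a := intervalIntegral.integral_eq_sub_of_hasDeriv_right_of_le hab hcont
        (fun x hx => (hright x hx).hasDerivWithinAt) (hint.congr_ae hae)

theorem integral_abs_deriv_of_antitoneOn {f : ℝ → ℝ} {a b : ℝ} (hab : a ≤ b)
    (hcont : ContinuousOn f (Icc a b)) (hanti : AntitoneOn f (Icc a b))
    (hright : ∀ x ∈ Ioo a b, DifferentiableWithinAt ℝ f (Ioi x) x) :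
    ∫ x in a..b, |deriv f x| = f a - f b := by
  simpa only [deriv.neg, abs_neg, Pi.neg_apply, neg_sub_neg] using
    integral_abs_deriv_of_monotoneOn hab hcont.neg hanti.neg fun x hx => (hright x hx).neg

theorem intervalIntegrable_deriv_of_antitoneOn {f : ℝ → ℝ} {a b : ℝ}
    (hanti : AntitoneOn f (uIcc a b)) : IntervalIntegrable (deriv f) volume a b := by
  have hneg : deriv f = -deriv (-f) := by
    ext x
    simp
  exact hneg ▸ (MonotoneOn.intervalIntegrable_deriv hanti.neg).neg

section Interval

variable {f : ℝ → ℝ} {a b x₀ : ℝ}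

theorem monotoneOn_Icc_of_concaveOn_of_isMaxOn (hf : ConcaveOn ℝ (Icc a b) f)
    (hx₀ : x₀ ∈ Icc a b) (hmax : IsMaxOn f (Icc a b) x₀) : MonotoneOn f (Icc a x₀) := by
  intro x hx y hy hxy
  have hxab : x ∈ Icc a b := Icc_subset_Icc_right hx₀.2 hx
  exact (le_min le_rfl (hmax hxab)).trans (hf.min_le_of_mem_Icc hxab hx₀ ⟨hxy, hy.2⟩)

theorem antitoneOn_Icc_of_concaveOn_of_isMaxOn (hf : ConcaveOn ℝ (Icc a b) f)
    (hx₀ : x₀ ∈ Icc a b) (hmax : IsMaxOn f (Icc a b) x₀) : AntitoneOn f (Icc x₀ b) := by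
  intro x hx y hy hxy
  have hyab : y ∈ Icc a b := Icc_subset_Icc_left hx₀.1 hy
  exact (le_min (hmax hyab) le_rfl).trans (hf.min_le_of_mem_Icc hx₀ hyab ⟨hx.1, hxy⟩)

theorem intervalIntegrable_deriv_of_concaveOn_of_isMaxOn (hf : ConcaveOn ℝ (Icc a b) f)
    (hx₀ : x₀ ∈ Icc a b) (hmax : IsMaxOn f (Icc a b) x₀) :
    IntervalIntegrable (deriv f) volume a x₀ ∧ IntervalIntegrable (deriv f) volume x₀ b := by
  have hmono := monotoneOn_Icc_of_concaveOn_of_isMaxOn hf hx₀ hmax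
  have hanti := antitoneOn_Icc_of_concaveOn_of_isMaxOn hf hx₀ hmax
  rw [← uIcc_of_le hx₀.1] at hmono
  rw [← uIcc_of_le hx₀.2] at hanti
  exact ⟨hmono.intervalIntegrable_deriv, intervalIntegrable_deriv_of_antitoneOn hanti⟩

theorem integrableOn_deriv_of_concaveOn (hf : ConcaveOn ℝ (Icc a b) f)
    (hcont : ContinuousOn f (Icc a b)) : IntegrableOn (deriv f) (Icc a b) := by
  rcases (Icc a b).eq_empty_or_nonempty with hempty | hne
  · simp [hempty]
  obtain ⟨x₀, hx₀, hmax⟩ := isCompact_Icc.exists_isMaxOn hne hcont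
  obtain ⟨hleft, hright⟩ := intervalIntegrable_deriv_of_concaveOn_of_isMaxOn hf hx₀ hmax
  exact (intervalIntegrable_iff_integrableOn_Icc_of_le (nonempty_Icc.1 hne)).1
    (hleft.trans hright)

theorem setIntegral_abs_deriv_of_concaveOn_of_isMaxOn (hf : ConcaveOn ℝ (Icc a b) f)
    (hcont : ContinuousOn f (Icc a b)) (hx₀ : x₀ ∈ Icc a b) (hmax : IsMaxOn f (Icc a b) x₀) :
    ∫ x in Icc a b, |deriv f x| = 2 * f x₀ - f a - f b := by
  have hdiff : ∀ x ∈ Ioo a b, DifferentiableWithinAt ℝ f (Ioi x) x := fun x hx => by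
    simpa only [neg_neg] using (hf.neg.hasDerivWithinAt_rightDeriv_of_mem_interior
      (by rwa [interior_Icc])).differentiableWithinAt.neg
  have hleft : ∫ x in a..x₀, |deriv f x| = f x₀ - f a :=
    integral_abs_deriv_of_monotoneOn hx₀.1 (hcont.mono (Icc_subset_Icc_right hx₀.2))
      (monotoneOn_Icc_of_concaveOn_of_isMaxOn hf hx₀ hmax)
      fun x hx => hdiff x ⟨hx.1, hx.2.trans_le hx₀.2⟩
  have hright : ∫ x in x₀..b, |deriv f x| = f x₀ - f b :=
    integral_abs_deriv_of_antitoneOn hx₀.2 (hcont.mono (Icc_subset_Icc_left hx₀.1))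
      (antitoneOn_Icc_of_concaveOn_of_isMaxOn hf hx₀ hmax)
      fun x hx => hdiff x ⟨hx₀.1.trans_lt hx.1, hx.2⟩
  obtain ⟨hintleft, hintright⟩ := intervalIntegrable_deriv_of_concaveOn_of_isMaxOn hf hx₀ hmax
  rw [integral_Icc_eq_integral_Ioc, ← intervalIntegral.integral_of_le (hx₀.1.trans hx₀.2),
    ← intervalIntegral.integral_add_adjacent_intervals hintleft.abs hintright.abs, hleft, hright]
  ring

end Interval

theorem image_homothety_subset_superlevel {E : Type*} [AddCommGroup E] [Module ℝ E] {s : Set E}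
    {f : E → ℝ} (hf : ConcaveOn ℝ s f) (hnonneg : ∀ x ∈ s, 0 ≤ f x) {q : E} (hq : q ∈ s) {r : ℝ}
    (hr : r ∈ Icc (0 : ℝ) 1) :
    AffineMap.homothety q r '' s ⊆ {x ∈ s | (1 - r) * f q ≤ f x} := by
  rintro _ ⟨x, hx, rfl⟩
  have hcomb : AffineMap.homothety q r x = (1 - r) • q + r • x := by
    rw [AffineMap.homothety_eq_lineMap, AffineMap.lineMap_apply_module]
  have hr' := sub_nonneg.2 hr.2
  rw [hcomb]
  refine ⟨hf.1 hq hx hr' hr.1 (sub_add_cancel 1 r), ?_⟩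
  calc (1 - r) * f q ≤ (1 - r) * f q + r * f x :=
        le_add_of_nonneg_right (mul_nonneg hr.1 (hnonneg x hx))
    _ ≤ f ((1 - r) • q + r • x) := hf.2 hq hx hr' hr.1 (sub_add_cancel 1 r)

section Haar

variable {E : Type*} [NormedAddCommGroup E] [NormedSpace ℝ E] [FiniteDimensional ℝ E]
  [MeasurableSpace E] [BorelSpace E] (μ : Measure E) [μ.IsAddHaarMeasure] {s : Set E} {f : E → ℝ}

theorem pow_mul_measureReal_le_measureReal_superlevel (hs : μ s ≠ ∞) (hf : ConcaveOn ℝ s f)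
    (hnonneg : ∀ x ∈ s, 0 ≤ f x) {q : E} (hq : q ∈ s) {r : ℝ} (hr : r ∈ Icc (0 : ℝ) 1) :
    r ^ Module.finrank ℝ E * μ.real s ≤ μ.real {x ∈ s | (1 - r) * f q ≤ f x} := by
  have hle := measureReal_mono (μ := μ) (image_homothety_subset_superlevel hf hnonneg hq hr)
    (measure_ne_top_of_subset (sep_subset _ _) hs)
  rwa [measureReal_def, Measure.addHaar_image_homothety, ENNReal.toReal_mul, ← measureReal_def,
    ENNReal.toReal_ofReal (abs_nonneg _), abs_of_nonneg (pow_nonneg hr.1 _)] at hle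

theorem measureReal_mul_div_finrank_add_one_le_setIntegral {M : ℝ} (hs : μ s ≠ ∞)
    (hf : ConcaveOn ℝ s f) (hnonneg : ∀ x ∈ s, 0 ≤ f x) (hint : IntegrableOn f s μ)
    (hM : IsGreatest (f '' s) M) :
    μ.real s * M / (Module.finrank ℝ E + 1) ≤ ∫ x in s, f x ∂μ := by
  obtain ⟨⟨q, hq, rfl⟩, hmax⟩ := hM
  set n := Module.finrank ℝ E
  have hnull : NullMeasurableSet s μ := hf.1.nullMeasurableSet μ
  rcases (hnonneg q hq).eq_or_lt with hzero | hpos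
  · simpa [← hzero] using integral_nonneg_of_ae ((ae_restrict_mem₀ hnull).mono hnonneg)
  have : IsFiniteMeasure (μ.restrict s) := ⟨by simpa using hs.lt_top⟩
  have hanti : Antitone fun t => (μ.restrict s).real {x | t ≤ f x} :=
    fun t t' htt' => measureReal_mono fun x hx => htt'.trans hx
  have hlevel : ∀ t ∈ Icc 0 (f q),
      (1 - t / f q) ^ n * μ.real s ≤ (μ.restrict s).real {x | t ≤ f x} := by
    intro t ht
    have hr : 1 - t / f q ∈ Icc (0 : ℝ) 1 :=
      ⟨sub_nonneg.2 ((div_le_one hpos).2 ht.2), sub_le_self _ (div_nonneg ht.1 hpos.le)⟩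
    convert pow_mul_measureReal_le_measureReal_superlevel μ hs hf hnonneg hq hr using 1
    rw [sub_sub_cancel, div_mul_cancel₀ _ hpos.ne', measureReal_def,
      Measure.restrict_apply₀' hnull, inter_comm, ← measureReal_def]
    rfl
  calc μ.real s * f q / (n + 1) = ∫ t in (0 : ℝ)..f q, (1 - t / f q) ^ n * μ.real s := by
        rw [intervalIntegral.integral_mul_const,
          intervalIntegral.integral_comp_sub_div (fun x => x ^ n) hpos.ne']
        simp [hpos.ne']
        ring
    _ ≤ ∫ t in (0 : ℝ)..f q, (μ.restrict s).real {x | t ≤ f x} :=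
        intervalIntegral.integral_mono_on hpos.le
          (Continuous.intervalIntegrable (by fun_prop) _ _) hanti.intervalIntegrable hlevel
    _ = ∫ x in s, f x ∂μ := by
        rw [intervalIntegral.integral_of_le hpos.le,
          Integrable.integral_eq_integral_Ioc_meas_le hint ((ae_restrict_mem₀ hnull).mono hnonneg)
          ((ae_restrict_mem₀ hnull).mono fun x hx => hmax (mem_image_of_mem f hx))]

theorem integrableOn_of_concaveOn (hs : μ s ≠ ∞) (hf : ConcaveOn ℝ s f) {C : ℝ}
    (hbound : ∀ x ∈ s, |f x| ≤ C) : IntegrableOn f s μ := by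
  have hinterior : interior s =ᵐ[μ] s := interior_ae_eq_of_null_frontier (hf.1.addHaar_frontier μ)
  have hmeas : AEStronglyMeasurable f (μ.restrict s) := by
    rw [← Measure.restrict_congr_set hinterior]
    exact hf.continuousOn_interior.aestronglyMeasurable isOpen_interior.measurableSet
  exact .of_bound hs.lt_top hmeas C
    ((ae_restrict_mem₀ (hf.1.nullMeasurableSet μ)).mono hbound)

theorem ae_differentiableAt_of_concaveOn (hf : ConcaveOn ℝ s f) :
    ∀ᵐ x ∂μ, x ∈ s → DifferentiableAt ℝ f x := by
  have hnull : μ {x ∈ interior s | ¬ DifferentiableAt ℝ f x} = 0 := by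
    refine measure_null_of_locally_null _ fun x hx => ?_
    obtain ⟨K, t, ht, hK⟩ := hf.locallyLipschitzOn_interior hx.1
    rw [isOpen_interior.nhdsWithin_eq hx.1] at ht
    refine ⟨{y ∈ interior t | ¬ DifferentiableAt ℝ f y}, ?_, measure_mono_null ?_
      (ae_iff.1 ((hK.mono interior_subset).ae_differentiableWithinAt_of_mem (μ := μ)))⟩
    · filter_upwards [mem_nhdsWithin_of_mem_nhds (interior_mem_nhds.2 ht), self_mem_nhdsWithin]
        with y hyt hys using ⟨hyt, hys.2⟩
    · exact fun y hy hdiff => hy.2 ((hdiff hy.1).differentiableAt (isOpen_interior.mem_nhds hy.1))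
  filter_upwards [measure_eq_zero_iff_ae_notMem.1 hnull,
    (interior_ae_eq_of_null_frontier (hf.1.addHaar_frontier μ)).mem_iff] with x hx hmem hxs
  exact not_not.1 fun hdiff => hx ⟨hmem.2 hxs, hdiff⟩

end Haar

/-- The supremum of `u` over the part of `Ω` that projects to `y` (the junk value `sSup ∅ = 0` off
the projection of `Ω`). -/
noncomputable def fiberSup {α β : Type*} (Ω : Set (α × β)) (u : α × β → ℝ) (y : β) : ℝ :=
  sSup (u '' (Ω ∩ Prod.snd ⁻¹' {y}))

section FiberSup

variable {α β : Type*} [TopologicalSpace α] [TopologicalSpace β] [T1Space β] {Ω : Set (α × β)}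
  {u : α × β → ℝ}

theorem isGreatest_fiberSup (hΩ : IsCompact Ω) (hcont : ContinuousOn u Ω) {y : β}
    (hy : y ∈ Prod.snd '' Ω) : IsGreatest (u '' (Ω ∩ Prod.snd ⁻¹' {y})) (fiberSup Ω u y) := by
  obtain ⟨z, hz, rfl⟩ := hy
  have hcompact : IsCompact (Ω ∩ Prod.snd ⁻¹' {z.2}) :=
    hΩ.inter_right (isClosed_singleton.preimage continuous_snd)
  exact (hcompact.image_of_continuousOn (hcont.mono inter_subset_left)).isGreatest_sSup
    ⟨u z, z, ⟨hz, rfl⟩, rfl⟩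

theorem isGreatest_image_fiberSup (hΩ : IsCompact Ω) (hcont : ContinuousOn u Ω) {M : ℝ}
    (hM : IsGreatest (u '' Ω) M) : IsGreatest (fiberSup Ω u '' (Prod.snd '' Ω)) M := by
  have hle : ∀ y ∈ Prod.snd '' Ω, fiberSup Ω u y ≤ M := fun y hy =>
    hM.2 (image_mono inter_subset_left (isGreatest_fiberSup hΩ hcont hy).1)
  obtain ⟨z, hz, rfl⟩ := hM.1
  have hmem := mem_image_of_mem Prod.snd hz
  have hge := (isGreatest_fiberSup hΩ hcont hmem).2 ⟨z, ⟨hz, rfl⟩, rfl⟩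
  exact ⟨⟨z.2, hmem, (hle _ hmem).antisymm hge⟩, forall_mem_image.2 hle⟩

end FiberSup

section ConvexFibers

variable {F E : Type*} [AddCommGroup F] [Module ℝ F] [AddCommGroup E] [Module ℝ E]

theorem concaveOn_fiberSup [TopologicalSpace F] [TopologicalSpace E] [T1Space E]
    {Ω : Set (F × E)} {u : F × E → ℝ} (hΩ : IsCompact Ω) (hcont : ContinuousOn u Ω)
    (hconc : ConcaveOn ℝ Ω u) : ConcaveOn ℝ (Prod.snd '' Ω) (fiberSup Ω u) := by
  have hconv : Convex ℝ (Prod.snd '' Ω) := hconc.1.linear_image (LinearMap.snd ℝ F E)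
  refine ⟨hconv, fun y₁ hy₁ y₂ hy₂ r s hr hs hrs => ?_⟩
  obtain ⟨z₁, ⟨hz₁, rfl⟩, heq₁⟩ := (isGreatest_fiberSup hΩ hcont hy₁).1
  obtain ⟨z₂, ⟨hz₂, rfl⟩, heq₂⟩ := (isGreatest_fiberSup hΩ hcont hy₂).1
  have hle := (isGreatest_fiberSup hΩ hcont (hconv hy₁ hy₂ hr hs hrs)).2
    ⟨_, ⟨hconc.1 hz₁ hz₂ hr hs hrs, rfl⟩, rfl⟩
  rw [← heq₁, ← heq₂]
  exact (hconc.2 hz₁ hz₂ hr hs hrs).trans hle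

theorem concaveOn_fiber {Ω : Set (F × E)} {u : F × E → ℝ} (hconc : ConcaveOn ℝ Ω u) (y : E) :
    ConcaveOn ℝ ((fun t => (t, y)) ⁻¹' Ω) fun t => u (t, y) :=
  hconc.comp_affineMap ((AffineMap.id ℝ F).prod (AffineMap.const ℝ F y))

variable [TopologicalSpace E] [T2Space E] {Ω : Set (ℝ × E)} {u : ℝ × E → ℝ}

theorem exists_fiber_eq_Icc (hΩ : IsCompact Ω) (hconv : Convex ℝ Ω) {y : E}
    (hy : y ∈ Prod.snd '' Ω) :
    ∃ a b : ℝ, a ≤ b ∧ (fun t => (t, y)) ⁻¹' Ω = Icc a b ∧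
      (a, y) ∈ frontier Ω ∧ (b, y) ∈ frontier Ω := by
  obtain ⟨⟨x, y⟩, hxy, rfl⟩ := hy
  have hcont : Continuous fun t : ℝ => (t, y) := by fun_prop
  have hfiber_convex : Convex ℝ ((fun t : ℝ => (t, y)) ⁻¹' Ω) :=
    hconv.affine_preimage ((AffineMap.id ℝ ℝ).prod (AffineMap.const ℝ ℝ y))
  have hfiber_compact : IsCompact ((fun t : ℝ => (t, y)) ⁻¹' Ω) :=
    (hΩ.image continuous_fst).of_isClosed_subset (hΩ.isClosed.preimage hcont)
      fun t ht => ⟨(t, y), ht, rfl⟩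
  obtain ⟨a, b, heq⟩ : ∃ a b, (fun t : ℝ => (t, y)) ⁻¹' Ω = Icc a b :=
    ⟨_, _, eq_Icc_of_connected_compact ⟨⟨x, hxy⟩, hfiber_convex.isPreconnected⟩ hfiber_compact⟩
  have hab : a ≤ b := nonempty_Icc.1 (heq ▸ ⟨x, hxy⟩)
  have hinterior : ∀ t, (t, y) ∈ interior Ω → t ∈ Ioo a b := fun t ht => by
    have h := preimage_interior_subset_interior_preimage hcont ht
    rwa [heq, interior_Icc] at h
  have hmem : ∀ t ∈ Icc a b, (t, y) ∈ Ω := fun t ht => heq.ge ht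
  exact ⟨a, b, hab, heq,
    ⟨subset_closure (hmem a (left_mem_Icc.2 hab)), fun h => (hinterior a h).1.false⟩,
    ⟨subset_closure (hmem b (right_mem_Icc.2 hab)), fun h => (hinterior b h).2.false⟩⟩

theorem nonneg_of_concaveOn_of_frontier_eq_zero (hΩ : IsCompact Ω) (hconc : ConcaveOn ℝ Ω u)
    (hfrontier : ∀ z ∈ frontier Ω, u z = 0) {z : ℝ × E} (hz : z ∈ Ω) : 0 ≤ u z := by
  obtain ⟨a, b, hab, heq, ha, hb⟩ := exists_fiber_eq_Icc hΩ hconc.1 (mem_image_of_mem _ hz)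
  have hconc' := concaveOn_fiber hconc z.2
  rw [heq] at hconc'
  have hle := hconc'.min_le_of_mem_Icc (left_mem_Icc.2 hab) (right_mem_Icc.2 hab)
    (heq.le hz : z.1 ∈ Icc a b)
  rwa [hfrontier _ ha, hfrontier _ hb, min_self] at hle

end ConvexFibers

section Fubini

variable {E : Type*} [NormedAddCommGroup E] [NormedSpace ℝ E] {Ω : Set (ℝ × E)} {u : ℝ × E → ℝ}

theorem ae_deriv_fiber_eq_fderiv {y : E}
    (hdiff : ∀ᵐ t, (t, y) ∈ Ω → DifferentiableAt ℝ u (t, y)) :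
    ∀ᵐ t, (t, y) ∈ Ω → deriv (fun t => u (t, y)) t = fderiv ℝ u (t, y) (1, 0) := by
  filter_upwards [hdiff] with t hdiff_t ht
  exact ((hdiff_t ht).hasFDerivAt.comp_hasDerivAt t
    ((hasDerivAt_id t).prodMk (hasDerivAt_const t y))).deriv

theorem integrableOn_fderiv_fiber (hΩ : IsCompact Ω) (hcont : ContinuousOn u Ω)
    (hconc : ConcaveOn ℝ Ω u) {y : E} (hy : y ∈ Prod.snd '' Ω)
    (hdiff : ∀ᵐ t, (t, y) ∈ Ω → DifferentiableAt ℝ u (t, y)) :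
    IntegrableOn (fun t => fderiv ℝ u (t, y) (1, 0)) ((fun t => (t, y)) ⁻¹' Ω) := by
  obtain ⟨a, b, -, heq, -, -⟩ := exists_fiber_eq_Icc hΩ hconc.1 hy
  have hint : IntegrableOn (deriv fun t => u (t, y)) (Icc a b) :=
    integrableOn_deriv_of_concaveOn (heq ▸ concaveOn_fiber hconc y)
      (hcont.comp (by fun_prop) heq.ge)
  rw [heq]
  refine hint.congr ((ae_restrict_iff' measurableSet_Icc).2 ?_)
  exact (ae_deriv_fiber_eq_fderiv hdiff).mono fun t ht htab => ht (heq.ge htab)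

theorem setIntegral_abs_fderiv_fiber (hΩ : IsCompact Ω) (hcont : ContinuousOn u Ω)
    (hconc : ConcaveOn ℝ Ω u) (hfrontier : ∀ z ∈ frontier Ω, u z = 0) {y : E}
    (hy : y ∈ Prod.snd '' Ω) (hdiff : ∀ᵐ t, (t, y) ∈ Ω → DifferentiableAt ℝ u (t, y)) :
    ∫ t in (fun t => (t, y)) ⁻¹' Ω, |fderiv ℝ u (t, y) (1, 0)| = 2 * fiberSup Ω u y := by
  obtain ⟨a, b, -, heq, ha, hb⟩ := exists_fiber_eq_Icc hΩ hconc.1 hy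
  obtain ⟨⟨⟨x₀, y⟩, ⟨hx₀, rfl⟩, hsup⟩, hle⟩ := isGreatest_fiberSup hΩ hcont hy
  have hmax : IsMaxOn (fun t => u (t, y)) (Icc a b) x₀ := fun t ht =>
    (hle ⟨(t, y), ⟨heq.ge ht, rfl⟩, rfl⟩).trans_eq hsup.symm
  calc ∫ t in (fun t => (t, y)) ⁻¹' Ω, |fderiv ℝ u (t, y) (1, 0)|
      = ∫ t in Icc a b, |deriv (fun t => u (t, y)) t| := by
        rw [heq]
        refine setIntegral_congr_ae measurableSet_Icc ?_
        exact (ae_deriv_fiber_eq_fderiv hdiff).mono fun t ht htab =>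
          congrArg abs (ht (heq.ge htab)).symm
    _ = 2 * u (x₀, y) - u (a, y) - u (b, y) :=
        setIntegral_abs_deriv_of_concaveOn_of_isMaxOn (heq ▸ concaveOn_fiber hconc y)
          (hcont.comp (by fun_prop) heq.ge) (heq.le hx₀) hmax
    _ = 2 * fiberSup Ω u y := by
        rw [hfrontier _ ha, hfrontier _ hb, sub_zero, sub_zero, ← hsup]

variable [FiniteDimensional ℝ E] [MeasurableSpace E] [BorelSpace E] (μ : Measure E)
  [μ.IsAddHaarMeasure]

theorem ae_ae_differentiableAt_of_concaveOn (hconc : ConcaveOn ℝ Ω u) :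
    ∀ᵐ y ∂μ, ∀ᵐ t : ℝ, (t, y) ∈ Ω → DifferentiableAt ℝ u (t, y) :=
  Measure.ae_ae_of_ae_prod (Measure.measurePreserving_swap.quasiMeasurePreserving.ae
    (ae_differentiableAt_of_concaveOn (volume.prod μ) hconc))

theorem integrableOn_fiberSup (hΩ : IsCompact Ω) (hcont : ContinuousOn u Ω)
    (hconc : ConcaveOn ℝ Ω u) :
    IntegrableOn (fiberSup Ω u) (Prod.snd '' Ω) μ := by
  obtain ⟨C, hC⟩ := hΩ.exists_bound_of_continuousOn hcont
  refine integrableOn_of_concaveOn μ (hΩ.image continuous_snd).measure_lt_top.ne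
    (concaveOn_fiberSup hΩ hcont hconc) (C := C) fun y hy => ?_
  obtain ⟨z, hz, heq⟩ := (isGreatest_fiberSup hΩ hcont hy).1
  exact heq ▸ hC z hz.1

theorem ae_integrable_indicator_fderiv_fiber (hΩ : IsCompact Ω) (hcont : ContinuousOn u Ω)
    (hconc : ConcaveOn ℝ Ω u) :
    ∀ᵐ y ∂μ, Integrable fun t => Ω.indicator (fun z => fderiv ℝ u z (1, 0)) (t, y) := by
  filter_upwards [ae_ae_differentiableAt_of_concaveOn μ hconc] with y hdiff
  by_cases hy : y ∈ Prod.snd '' Ω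
  · exact (integrable_indicator_iff (measurable_prodMk_right hΩ.measurableSet)).2
      (integrableOn_fderiv_fiber hΩ hcont hconc hy hdiff)
  · have hzero : ∀ t, (t, y) ∉ Ω := fun t ht => hy ⟨(t, y), ht, rfl⟩
    simp [hzero]

theorem ae_integral_norm_indicator_fderiv_fiber (hΩ : IsCompact Ω) (hcont : ContinuousOn u Ω)
    (hconc : ConcaveOn ℝ Ω u) (hfrontier : ∀ z ∈ frontier Ω, u z = 0) :
    ∀ᵐ y ∂μ, ∫ t, ‖Ω.indicator (fun z => fderiv ℝ u z (1, 0)) (t, y)‖ =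
      (Prod.snd '' Ω).indicator (fun y => 2 * fiberSup Ω u y) y := by
  filter_upwards [ae_ae_differentiableAt_of_concaveOn μ hconc] with y hdiff
  by_cases hy : y ∈ Prod.snd '' Ω
  · rw [indicator_of_mem hy, ← setIntegral_abs_fderiv_fiber hΩ hcont hconc hfrontier hy hdiff,
      ← integral_indicator (measurable_prodMk_right hΩ.measurableSet)]
    simp_rw [norm_indicator_eq_indicator_norm]
    rfl
  · have hzero : ∀ t, (t, y) ∉ Ω := fun t ht => hy ⟨(t, y), ht, rfl⟩
    simp [hzero, hy]

theorem integrable_indicator_fderiv (hΩ : IsCompact Ω) (hcont : ContinuousOn u Ω)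
    (hconc : ConcaveOn ℝ Ω u) (hfrontier : ∀ z ∈ frontier Ω, u z = 0) :
    Integrable (Ω.indicator fun z => fderiv ℝ u z (1, 0)) (volume.prod μ) := by
  have hmeas : Measurable (Ω.indicator fun z => fderiv ℝ u z (1, 0)) :=
    (measurable_fderiv_apply_const ℝ u _).indicator hΩ.measurableSet
  have hsup : Integrable ((Prod.snd '' Ω).indicator fun y => 2 * fiberSup Ω u y) μ :=
    (integrable_indicator_iff (hΩ.image continuous_snd).measurableSet).2
      ((integrableOn_fiberSup μ hΩ hcont hconc).const_mul 2)
  exact (integrable_prod_iff' hmeas.aestronglyMeasurable).2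
    ⟨ae_integrable_indicator_fderiv_fiber μ hΩ hcont hconc, hsup.congr <|
      (ae_integral_norm_indicator_fderiv_fiber μ hΩ hcont hconc hfrontier).mono fun _ => Eq.symm⟩

theorem setIntegral_abs_fderiv_eq_two_mul_setIntegral_fiberSup (hΩ : IsCompact Ω)
    (hcont : ContinuousOn u Ω) (hconc : ConcaveOn ℝ Ω u) (hfrontier : ∀ z ∈ frontier Ω, u z = 0) :
    ∫ z in Ω, |fderiv ℝ u z (1, 0)| ∂volume.prod μ =
      2 * ∫ y in Prod.snd '' Ω, fiberSup Ω u y ∂μ := by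
  set g : ℝ × E → ℝ := Ω.indicator fun z => fderiv ℝ u z (1, 0) with hg
  calc ∫ z in Ω, |fderiv ℝ u z (1, 0)| ∂volume.prod μ = ∫ z, ‖g z‖ ∂volume.prod μ := by
        simp_rw [hg, norm_indicator_eq_indicator_norm, Real.norm_eq_abs]
        rw [integral_indicator hΩ.measurableSet]
    _ = ∫ y, (∫ t, ‖g (t, y)‖) ∂μ :=
        integral_prod_symm _ (integrable_indicator_fderiv μ hΩ hcont hconc hfrontier).norm
    _ = ∫ y, (Prod.snd '' Ω).indicator (fun y => 2 * fiberSup Ω u y) y ∂μ :=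
        integral_congr_ae (ae_integral_norm_indicator_fderiv_fiber μ hΩ hcont hconc hfrontier)
    _ = 2 * ∫ y in Prod.snd '' Ω, fiberSup Ω u y ∂μ := by
        rw [integral_indicator (hΩ.image continuous_snd).measurableSet, integral_const_mul]

theorem stmt_2_general (hΩ : IsCompact Ω) (hcont : ContinuousOn u Ω) (hconc : ConcaveOn ℝ Ω u)
    (hfrontier : ∀ z ∈ frontier Ω, u z = 0) {M : ℝ} (hM : IsGreatest (u '' Ω) M) :
    IntegrableOn (fun z => fderiv ℝ u z (1, 0)) Ω (volume.prod μ) ∧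
      2 * (μ.real (Prod.snd '' Ω) * M / (Module.finrank ℝ E + 1)) ≤
        ∫ z in Ω, |fderiv ℝ u z (1, 0)| ∂volume.prod μ ∧
      ∫ z in Ω, |fderiv ℝ u z (1, 0)| ∂volume.prod μ ≤ 2 * (μ.real (Prod.snd '' Ω) * M) := by
  have hP : IsCompact (Prod.snd '' Ω) := hΩ.image continuous_snd
  have hmax := isGreatest_image_fiberSup hΩ hcont hM
  have hsup := integrableOn_fiberSup μ hΩ hcont hconc
  have hnonneg : ∀ y ∈ Prod.snd '' Ω, 0 ≤ fiberSup Ω u y := fun y hy => by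
    obtain ⟨z, hz, hzy⟩ := (isGreatest_fiberSup hΩ hcont hy).1
    exact hzy ▸ nonneg_of_concaveOn_of_frontier_eq_zero hΩ hconc hfrontier hz.1
  rw [setIntegral_abs_fderiv_eq_two_mul_setIntegral_fiberSup μ hΩ hcont hconc hfrontier]
  refine ⟨(integrable_indicator_iff hΩ.measurableSet).1
      (integrable_indicator_fderiv μ hΩ hcont hconc hfrontier),
    mul_le_mul_of_nonneg_left ?_ zero_le_two, mul_le_mul_of_nonneg_left ?_ zero_le_two⟩
  · exact measureReal_mul_div_finrank_add_one_le_setIntegral μ hP.measure_lt_top.ne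
      (concaveOn_fiberSup hΩ hcont hconc) hnonneg hsup hmax
  · calc ∫ y in Prod.snd '' Ω, fiberSup Ω u y ∂μ ≤ ∫ _ in Prod.snd '' Ω, M ∂μ :=
          setIntegral_mono_on hsup (integrableOn_const hP.measure_lt_top.ne) hP.measurableSet
            (forall_mem_image.1 hmax.2)
      _ = μ.real (Prod.snd '' Ω) * M := setIntegral_const M

end Fubini

/-- Theorem 2: `w·M ≤ ‖u_x‖₁ ≤ 2·w·M`, where `w` is the length of the
projection of `Ω` to the `y`-axis and `M = max_Ω u`. -/
theorem stmt_2 (Ω : Set (ℝ × ℝ)) (hΩc : IsCompact Ω) (hΩconv : Convex ℝ Ω)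
    (hΩint : (interior Ω).Nonempty)
    (u : ℝ × ℝ → ℝ) (hu : MemU Ω u)
    (c d : ℝ) (hproj : (fun z : ℝ × ℝ => z.2) '' Ω = Icc c d)
    (M : ℝ) (hM : IsGreatest (u '' Ω) M) :
    (d - c) * M ≤ L1N Ω (ux u) ∧ L1N Ω (ux u) ≤ 2 * ((d - c) * M) := by
  have hcd : c ≤ d := nonempty_Icc.1 (hproj ▸ (hΩint.mono interior_subset).image _)
  simpa [L1N, ux, hproj, Real.volume_real_Icc_of_le hcd, one_add_one_eq_two, mul_div_cancel₀,
    Measure.volume_eq_prod] using (stmt_2_general volume hΩc hu.1 hu.2.1 hu.2.2.1 hM).2
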